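/- Assume the vertex c is controllable. Then for every ℓ ∈ {0, …, d} and every value b ∈ B_ℓ^d = {b_{vℓ} : v ∈ D^d}, the vector field ∑_{v∈D^d : b_{vℓ}=b} ∂_{p_v} belongs to 𝓜. -/

import Mathlib

open scoped Classical
open Polynomial

noncomputable section

/-- Phase space ℝ^{2|V|}: positions `q = x.1` and momenta `p = x.2`. -/
abbrev Phase (V : Type) := (V → ℝ) × (V → ℝ)

/-- Lie bracket of vector fields: `[Y,Z](x) = DZ(x)·Y(x) − DY(x)·Z(x)`. -/
def lieB {V : Type} [Fintype V] (Y Z : Phase V → Phase V) : Phase V → Phase V :=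
  fun x => fderiv ℝ Z x (Y x) - fderiv ℝ Y x (Z x)

/-- The constant vector field `∂_{p_v}`. -/
def dp {V : Type} [Fintype V] [DecidableEq V] (v : V) : Phase V → Phase V :=
  fun _ => (0, Pi.single v 1)

/-- The constant vector field `∂_{q_v}`. -/
def dq {V : Type} [Fintype V] [DecidableEq V] (v : V) : Phase V → Phase V :=
  fun _ => (Pi.single v 1, 0)

/-- The constant vector field `∑_{v ∈ A} ∂_{p_v}`. -/
def dpSum {V : Type} [Fintype V] [DecidableEq V] (A : Finset V) : Phase V → Phase V :=
  fun _ => (0, ∑ v ∈ A, Pi.single v 1)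

/-- The constant vector field `∑_{v ∈ A} ∂_{q_v}`. -/
def dqSum {V : Type} [Fintype V] [DecidableEq V] (A : Finset V) : Phase V → Phase V :=
  fun _ => (∑ v ∈ A, Pi.single v 1, 0)

/-- The drift vector field
`X₀ = −∑_{v∈V*} γ_v p_v ∂_{p_v} + ∑_{v∈V} (p_v ∂_{q_v} − U_v'(q_v) ∂_{p_v})
      − ∑_{{u,v}∈E} V_{uv}'(q_u − q_v)(∂_{p_u} − ∂_{p_v})`,
written componentwise (using the symmetry `V_{vu}(x) = V_{uv}(−x)` of the
interaction potentials, the `∂_{p_v}`-component of the edge term at a vertex `v` is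
`−∑_{w ~ v} V_{vw}'(q_v − q_w)`). -/
def X0 {V : Type} [Fintype V] [DecidableEq V] (G : SimpleGraph V) [DecidableRel G.Adj]
    (γ : V → ℝ) (U : V → ℝ → ℝ) (Vp : V → V → Polynomial ℝ) : Phase V → Phase V :=
  fun x =>
    (x.2, fun v =>
      -(γ v) * x.2 v - deriv (U v) (x.1 v) -
        ∑ w ∈ Finset.univ.filter (fun w => G.Adj v w),
          (derivative (Vp v w)).eval (x.1 v - x.1 w))

/-- The smallest collection `𝓜` of vector fields on `ℝ^{2|V|}` that contains `∂_{p_v}`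
for every `v ∈ V*`, and is closed under linear combinations, Lie brackets,
bracketing with `X₀`, and multiplication by smooth scalar functions. -/
inductive MM {V : Type} [Fintype V] [DecidableEq V] (Vstar : Finset V)
    (X₀ : Phase V → Phase V) : (Phase V → Phase V) → Prop
  | basic (v : V) (hv : v ∈ Vstar) : MM Vstar X₀ (dp v)
  | add {Y Z : Phase V → Phase V} : MM Vstar X₀ Y → MM Vstar X₀ Z → MM Vstar X₀ (Y + Z)
  | smul (a : ℝ) {Y : Phase V → Phase V} : MM Vstar X₀ Y → MM Vstar X₀ (a • Y)
  | lie {Y Z : Phase V → Phase V} : MM Vstar X₀ Y → MM Vstar X₀ Z → MM Vstar X₀ (lieB Y Z)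
  | lieX {Y : Phase V → Phase V} : MM Vstar X₀ Y → MM Vstar X₀ (lieB Y X₀)
  | mulS (f : Phase V → ℝ) (hf : ContDiff ℝ (⊤ : ℕ∞) f) {Y : Phase V → Phase V} :
      MM Vstar X₀ Y → MM Vstar X₀ (fun x => f x • Y x)

/-- A vertex `v` is controllable if `∂_{q_v} ∈ 𝓜` and `∂_{p_v} ∈ 𝓜`. -/
def Controllable {V : Type} [Fintype V] [DecidableEq V] (Vstar : Finset V)
    (X₀ : Phase V → Phase V) (v : V) : Prop :=
  MM Vstar X₀ (dq v) ∧ MM Vstar X₀ (dp v)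

/-- Two polynomials are equivalent if `f(·) = g(· + δ)` for some `δ ∈ ℝ`. -/
def PolyEquiv (f g : Polynomial ℝ) : Prop :=
  ∃ δ : ℝ, ∀ x : ℝ, f.eval x = g.eval (x + δ)

/-- The set 𝒯 of neighbors ("targets") of a vertex `c`. -/
def Tset {V : Type} [Fintype V] [DecidableEq V] (G : SimpleGraph V) [DecidableRel G.Adj]
    (c : V) : Finset V :=
  Finset.univ.filter fun w => G.Adj c w

/-- The shift making a polynomial `g = ∑ a_i t^i/i!` of degree `k` adjusted
(i.e. killing the coefficient `a_{k−1}`), namely `a_{k−1}/a_k = coeff_{k−1}/(k·coeff_k)`. -/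
def adjShift (g : Polynomial ℝ) : ℝ :=
  g.coeff (g.natDegree - 1) / ((g.natDegree : ℝ) * g.leadingCoeff)

/-- The adjusted representation `g̃(·) = g(· − a_{k−1}/a_k)` of a polynomial `g`. -/
def adjRep (g : Polynomial ℝ) : Polynomial ℝ :=
  g.comp (Polynomial.X - Polynomial.C (adjShift g))

/-- `f̃_v`, the adjusted representation of `V''_{cv}`. -/
def ft {V : Type} (Vp : V → V → Polynomial ℝ) (c v : V) : Polynomial ℝ :=
  adjRep (derivative (derivative (Vp c v)))

/-- `d = max_{v∈𝒯} d_v`, the maximal degree of the adjusted polynomials `f̃_v`, `v ∈ 𝒯`. -/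
def dmax {V : Type} [Fintype V] [DecidableEq V] (G : SimpleGraph V) [DecidableRel G.Adj]
    (Vp : V → V → Polynomial ℝ) (c : V) : ℕ :=
  (Tset G c).sup fun v => (ft Vp c v).natDegree

/-- `D^d = {v ∈ 𝒯 : d_v = d}`, the neighbors of `c` of maximal adjusted degree. -/
def Dd {V : Type} [Fintype V] [DecidableEq V] (G : SimpleGraph V) [DecidableRel G.Adj]
    (Vp : V → V → Polynomial ℝ) (c : V) : Finset V :=
  (Tset G c).filter fun v => (ft Vp c v).natDegree = dmax G Vp c

/-- The coefficient `b_{vℓ}` in `f̃_v(x) = ∑_j b_{vj} x^j/j!`, i.e. `b_{vℓ} = ℓ!·coeff_ℓ(f̃_v)`. -/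
def bcoef {V : Type} (Vp : V → V → Polynomial ℝ) (c v : V) (ℓ : ℕ) : ℝ :=
  (Nat.factorial ℓ : ℝ) * (ft Vp c v).coeff ℓ

/-- The scalar function `x_v = q_c − q_v + δ_{cv}`, with `δ_{cv}` the adjusting shift
of `V''_{cv}`. -/
def xv {V : Type} [Fintype V] (Vp : V → V → Polynomial ℝ) (c v : V) : Phase V → ℝ :=
  fun x => x.1 c - x.1 v + adjShift (derivative (derivative (Vp c v)))

/-!
Write `Y_g = ∑_v g_v(x_v) ∂_{p_v}` for a tuple `g` of polynomials with `g_c = 0`, where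
`x_v = q_c − q_v + δ_v`. A direct computation gives `[∂_{q_c}, Y_g] = Y_{g'}` and
`[[Y_g, X₀], Y_k] = −Y_{(g k)'}`, whatever the pinning and the damping are. Hence the space `N` of
tuples `g` with `Y_g ∈ 𝓜` is closed under `g ↦ g'` and `(g, k) ↦ (g k)'`, and it contains
`f = (f̃_v)`, because `[∂_{q_c}, X₀]` differs from `Y_f` by a multiple of `∂_{p_c}`.

For a constant tuple `h ∈ N`, the product with `f^{(d-1)}` shows that `b_d h ∈ N`, where `b_ℓ` is
the tuple of the `b_{vℓ}`. As `b_d` takes finitely many values, Lagrange interpolation allows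
multiplication by any function of `b_d`, in particular `1_D ∈ N` for `D = D^d`. If `d ≥ 2`,
adjustedness makes `f^{(d-1)}` a multiple of `X` on `D`, which puts `1_D X` into `N`; then the
operator `g ↦ (X g)'` separates degrees and yields the constant terms `1_D b_ℓ` of `f^{(ℓ)}`, and
`(h X k)' = h k` makes the constant tuples on `D` an algebra. Interpolating in the values of `b_ℓ`
now produces the indicators of its level sets.
-/

open Set Function
open scoped Nat

section Polynomial

variable {R : Type*} [CommRing R] {p : R[X]} {n : ℕ}

lemma iterate_derivative_eq_C_of_natDegree_le (hp : p.natDegree ≤ n) :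
    derivative^[n] p = C (n ! * p.coeff n) := by
  ext j
  rw [coeff_iterate_derivative, coeff_C, nsmul_eq_mul]
  split_ifs with hj
  · rw [hj, zero_add, Nat.descFactorial_self]
  · rw [coeff_eq_zero_of_natDegree_lt (by lia), mul_zero]

lemma iterate_derivative_eq_C_mul_X (hp : p.natDegree ≤ n + 1) (hn : p.coeff n = 0) :
    derivative^[n] p = C ((n + 1)! * p.coeff (n + 1)) * X := by
  ext j
  rw [coeff_iterate_derivative, coeff_C_mul_X, nsmul_eq_mul]
  rcases lt_trichotomy j 1 with hj | rfl | hj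
  · obtain rfl : j = 0 := by lia
    simp [hn]
  · have := Nat.factorial_mul_descFactorial (Nat.le_succ n)
    rw [if_pos rfl, add_comm 1 n, ← this]
    simp
  · rw [coeff_eq_zero_of_natDegree_lt (by lia), if_neg hj.ne', mul_zero]

lemma taylor_coeff_of_natDegree_le (hp : p.natDegree ≤ n + 1) (r : R) :
    (taylor r p).coeff n = p.coeff n + (n + 1) * r * p.coeff (n + 1) := by
  have hdeg : (hasseDeriv n p).natDegree < 2 := by
    have := natDegree_hasseDeriv_le p n
    lia
  rw [taylor_coeff, eval_eq_sum_range' hdeg]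
  simp only [Finset.sum_range_succ, Finset.range_one, Finset.sum_singleton, hasseDeriv_coeff,
    zero_add, add_comm 1 n, Nat.choose_self, Nat.choose_succ_self_right, Nat.cast_add, Nat.cast_one,
    one_mul, pow_zero, mul_one, pow_one, add_right_inj]
  ring

end Polynomial

section Interpolation

variable {K : Type*} [Field K]

/-- On the finitely many values of `b`, every function `F` agrees with a polynomial. -/
lemma comp_mul_mem_of_mul_mem {ι : Type*} [Finite ι] {S : Submodule K (ι → K)} {b : ι → K}
    (hb : ∀ h ∈ S, b * h ∈ S) (F : K → K) {h : ι → K} (hh : h ∈ S) : (F ∘ b) * h ∈ S := by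
  let p := Lagrange.interpolate (finite_range b).toFinset id F
  have hp : aeval b p = F ∘ b := by
    ext i
    rw [aeval_pi_apply₂, coe_aeval_eq_eval]
    exact Lagrange.eval_interpolate_at_node F injective_id.injOn
      ((finite_range b).mem_toFinset.mpr (mem_range_self i))
  exact hp ▸ aeval_apply_smul_mem_of_le_comap' hh p b hb

end Interpolation

section SymmetricProduct

variable {K ι : Type*} [Field K]

/-- A space of polynomial tuples closed under componentwise differentiation and under
`(g, k) ↦ (g k)'`. Up to sign, the latter is the symmetric product `[[Y_g, X₀], Y_k]` of control
theory for the vector fields `Y_g = ∑_v g_v(x_v) ∂_{p_v}`. -/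
structure IsSymmetricProductClosed (N : Submodule K (ι → K[X])) : Prop where
  derivative_mem {g : ι → K[X]} (hg : g ∈ N) : derivative ∘ g ∈ N
  derivative_mul_mem {g k : ι → K[X]} (hg : g ∈ N) (hk : k ∈ N) : derivative ∘ (g * k) ∈ N

/-- The scalar tuples in `N`, a scalar being identified with a constant polynomial. -/
def constants (N : Submodule K (ι → K[X])) : Submodule K (ι → K) :=
  N.comap ((Algebra.linearMap K K[X]).compLeft ι)

lemma mem_constants {N : Submodule K (ι → K[X])} {h : ι → K} : h ∈ constants N ↔ C ∘ h ∈ N :=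
  Iff.rfl

/-- The coefficients `b_{iℓ}` in `f_i(x) = ∑_ℓ b_{iℓ} x^ℓ/ℓ!`. -/
def factorialCoeff (f : ι → K[X]) (ℓ : ℕ) : ι → K :=
  fun i => ℓ ! * (f i).coeff ℓ

lemma coeff_zero_iterate_derivative (f : ι → K[X]) (ℓ : ℕ) (i : ι) :
    (derivative^[ℓ] (f i)).coeff 0 = factorialCoeff f ℓ i := by
  simp [factorialCoeff, coeff_iterate_derivative, Nat.descFactorial_self]

namespace IsSymmetricProductClosed

variable {N : Submodule K (ι → K[X])} {f g : ι → K[X]} {h : ι → K} {n : ℕ}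

lemma iterate_derivative_mem (hN : IsSymmetricProductClosed N) (hf : f ∈ N) (k : ℕ) :
    derivative^[k] ∘ f ∈ N := by
  induction k with
  | zero => exact hf
  | succ k ih =>
    rw [iterate_succ']
    exact hN.derivative_mem ih

lemma C_mul_derivative_mem (hN : IsSymmetricProductClosed N) (hh : h ∈ constants N) (hg : g ∈ N) :
    (fun i => C (h i) * derivative (g i)) ∈ N := by
  convert hN.derivative_mul_mem hh hg using 2 with i
  simp

lemma factorialCoeff_mem (hN : IsSymmetricProductClosed N) (hf : f ∈ N)
    (hdeg : ∀ i, (f i).natDegree ≤ n) : factorialCoeff f n ∈ constants N := by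
  rw [mem_constants]
  convert hN.iterate_derivative_mem hf n using 1
  ext1 i
  exact (iterate_derivative_eq_C_of_natDegree_le (hdeg i)).symm

lemma factorialCoeff_mul_mem (hN : IsSymmetricProductClosed N) (hf : f ∈ N)
    (hdeg : ∀ i, (f i).natDegree ≤ n + 1) (hh : h ∈ constants N) :
    factorialCoeff f (n + 1) * h ∈ constants N := by
  rw [mem_constants]
  convert hN.C_mul_derivative_mem hh (hN.iterate_derivative_mem hf n) using 1
  ext1 i
  rw [comp_apply, comp_apply, ← iterate_succ_apply' derivative,
    iterate_derivative_eq_C_of_natDegree_le (hdeg i), ← C_mul, mul_comm]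
  rfl

lemma indicator_derivative_X_mul_mem (hN : IsSymmetricProductClosed N) {D : Set ι}
    (hX : D.indicator (fun _ => X) ∈ N) (hg : g ∈ N) :
    D.indicator (fun i => derivative (X * g i)) ∈ N := by
  convert hN.derivative_mul_mem hX hg using 1
  ext1 i
  by_cases hi : i ∈ D
  · simp only [indicator_of_mem hi, comp_apply, Pi.mul_apply]
  · simp [hi]

variable [Finite ι]

lemma comp_factorialCoeff_mul_mem (hN : IsSymmetricProductClosed N) (hf : f ∈ N)
    (hdeg : ∀ i, (f i).natDegree ≤ n + 1) (F : K → K) (hh : h ∈ constants N) :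
    (F ∘ factorialCoeff f (n + 1)) * h ∈ constants N :=
  comp_mul_mem_of_mul_mem (fun _ => hN.factorialCoeff_mul_mem hf hdeg) F hh

lemma indicator_support_mem (hN : IsSymmetricProductClosed N) (hf : f ∈ N)
    (hdeg : ∀ i, (f i).natDegree ≤ n + 1) :
    (support (factorialCoeff f (n + 1))).indicator 1 ∈ constants N := by
  convert hN.comp_factorialCoeff_mul_mem hf hdeg (·⁻¹) (hN.factorialCoeff_mem hf hdeg) using 1
  ext i
  by_cases hi : factorialCoeff f (n + 1) i = 0 <;> simp [indicator, hi]

lemma indicator_C_mul_X_mem (hN : IsSymmetricProductClosed N) (hf : f ∈ N)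
    (hdeg : ∀ i, (f i).natDegree ≤ n + 2)
    (hadj : ∀ i ∈ support (factorialCoeff f (n + 2)), (f i).coeff (n + 1) = 0)
    (hh : h ∈ constants N) :
    (support (factorialCoeff f (n + 2))).indicator (fun i => C (h i) * X) ∈ N := by
  convert hN.C_mul_derivative_mem (hN.comp_factorialCoeff_mul_mem hf hdeg (·⁻¹) hh)
    (hN.iterate_derivative_mem hf n) using 1
  ext1 i
  rw [comp_apply, ← iterate_succ_apply' derivative]
  by_cases hi : factorialCoeff f (n + 2) i = 0
  · simp [hi]
  · rw [indicator_of_mem hi, iterate_derivative_eq_C_mul_X (hdeg i) (hadj i hi), ← mul_assoc,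
      ← C_mul]
    congr 2
    change h i = (factorialCoeff f (n + 2) i)⁻¹ * h i * factorialCoeff f (n + 2) i
    field_simp

lemma indicator_mul_mem (hN : IsSymmetricProductClosed N) (hf : f ∈ N)
    (hdeg : ∀ i, (f i).natDegree ≤ n + 2)
    (hadj : ∀ i ∈ support (factorialCoeff f (n + 2)), (f i).coeff (n + 1) = 0)
    {k : ι → K} (hh : h ∈ constants N) (hk : k ∈ constants N) :
    (support (factorialCoeff f (n + 2))).indicator (h * k) ∈ constants N := by
  rw [mem_constants]
  convert hN.C_mul_derivative_mem hk (hN.indicator_C_mul_X_mem hf hdeg hadj hh) using 1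
  ext1 i
  by_cases hi : factorialCoeff f (n + 2) i = 0
  · simp [hi]
  · simp [hi, mul_comm (C (k i))]

variable [CharZero K]

lemma indicator_coeff_zero_mem (hN : IsSymmetricProductClosed N) {D : Set ι}
    (hX : D.indicator (fun _ => X) ∈ N) (hg : g ∈ N) :
    D.indicator (fun i => (g i).coeff 0) ∈ constants N := by
  obtain ⟨n, hn⟩ := Finite.exists_le fun i => (g i).natDegree
  replace hn : ∀ i ∈ D, (g i).natDegree ≤ n := fun i _ => hn i
  induction n generalizing g with
  | zero =>
    rw [mem_constants]
    convert hN.indicator_derivative_X_mul_mem hX hg using 1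
    ext1 i
    by_cases hi : i ∈ D
    · rw [comp_apply, indicator_of_mem hi, indicator_of_mem hi,
        eq_C_of_natDegree_le_zero (hn i hi)]
      simp
    · simp [hi]
  | succ n ih =>
    -- The Euler operator `g ↦ (X g)'` multiplies the coefficient of `X^j` by `j + 1`, so
    -- subtracting `(n + 2) g` kills the one of `X^(n+1)` and rescales the constant term.
    let g' := D.indicator (fun i => derivative (X * g i)) - (n + 2 : K) • g
    have coeff_g' {i} (hi : i ∈ D) (j : ℕ) : (g' i).coeff j = (j - (n + 1)) * (g i).coeff j := by
      simp only [g', Pi.sub_apply, Pi.smul_apply, indicator_of_mem hi, coeff_sub, coeff_smul,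
        coeff_derivative, coeff_X_mul, smul_eq_mul]
      ring
    have hg' : g' ∈ N := N.sub_mem (hN.indicator_derivative_X_mul_mem hX hg) (N.smul_mem _ hg)
    have hdeg : ∀ i ∈ D, (g' i).natDegree ≤ n := fun i hi => by
      refine natDegree_le_iff_coeff_eq_zero.mpr fun j hj => ?_
      rw [coeff_g' hi]
      rcases (Nat.succ_le_of_lt hj).eq_or_lt with rfl | hj
      · simp
      · rw [coeff_eq_zero_of_natDegree_lt ((hn i hi).trans_lt hj), mul_zero]
    convert (constants N).smul_mem (-(n + 1 : K)⁻¹) (ih hg' hdeg) using 1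
    ext i
    by_cases hi : i ∈ D
    · have : (n + 1 : K) ≠ 0 := n.cast_add_one_ne_zero
      simp only [Pi.smul_apply, indicator_of_mem hi, coeff_g' hi, smul_eq_mul, Nat.cast_zero,
        zero_sub]
      field_simp
    · simp [hi]

lemma indicator_factorialCoeff_mul_mem (hN : IsSymmetricProductClosed N) (hf : f ∈ N)
    (hdeg : ∀ i, (f i).natDegree ≤ n + 1)
    (hadj : ∀ i ∈ support (factorialCoeff f (n + 1)), (f i).coeff n = 0) (ℓ : ℕ)
    (hh : h ∈ constants N) :
    (support (factorialCoeff f (n + 1))).indicator (factorialCoeff f ℓ) * h ∈ constants N := by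
  rcases n with _ | n
  -- In degree one only `ℓ = 1` contributes, as adjustedness kills the constant terms.
  · obtain rfl | hℓ := eq_or_ne ℓ 1
    · simpa using hN.factorialCoeff_mul_mem hf hdeg hh
    · convert (constants N).zero_mem
      refine mul_eq_zero_of_left (indicator_eq_zero.mpr ?_) h
      refine disjoint_left.mpr fun i hi hi' => hi ?_
      obtain rfl | hℓ : ℓ = 0 ∨ 1 < ℓ := by lia
      · simp [factorialCoeff, hadj i hi']
      · simp [factorialCoeff, coeff_eq_zero_of_natDegree_lt ((hdeg i).trans_lt hℓ)]
  · have hX : (support (factorialCoeff f (n + 2))).indicator (fun _ => X) ∈ N := by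
      convert hN.indicator_C_mul_X_mem hf hdeg hadj (hN.indicator_support_mem hf hdeg) using 1
      refine indicator_congr fun i hi => ?_
      simp [indicator_of_mem hi]
    have hconst := hN.indicator_coeff_zero_mem hX (hN.iterate_derivative_mem hf ℓ)
    convert hN.indicator_mul_mem hf hdeg hadj hconst hh using 1
    ext i
    by_cases hi : factorialCoeff f (n + 2) i = 0 <;>
      simp [hi, coeff_zero_iterate_derivative]

theorem indicator_level_set_mem (hN : IsSymmetricProductClosed N) (hf : f ∈ N)
    (hdeg : ∀ i, (f i).natDegree ≤ n + 1)
    (hadj : ∀ i ∈ support (factorialCoeff f (n + 1)), (f i).coeff n = 0) (ℓ : ℕ) (b : K) :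
    {i ∈ support (factorialCoeff f (n + 1)) | factorialCoeff f ℓ i = b}.indicator 1
      ∈ constants N := by
  have hmul := fun h => hN.indicator_factorialCoeff_mul_mem hf hdeg hadj (h := h) ℓ
  convert comp_mul_mem_of_mul_mem hmul (if · = b then 1 else 0) (hN.indicator_support_mem hf hdeg)
    using 1
  ext i
  by_cases hi : factorialCoeff f (n + 1) i = 0 <;> simp [indicator, hi]

end IsSymmetricProductClosed

end SymmetricProduct

section PolynomialFunctions

lemma contDiff_eval {𝕜 : Type*} [NontriviallyNormedField 𝕜] {n : WithTop ℕ∞} (p : 𝕜[X]) :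
    ContDiff 𝕜 n fun x => p.eval x := by
  simpa only [coe_aeval_eq_eval] using p.contDiff_aeval (𝕜 := 𝕜) n

lemma eval_derivative_derivative_neg {R : Type*} [CommRing R] [IsDomain R] [Infinite R]
    {p r : R[X]} (h : ∀ x, p.eval x = r.eval (-x)) (x : R) :
    (derivative (derivative p)).eval x = (derivative (derivative r)).eval (-x) := by
  obtain rfl : p = r.comp (-X) := Polynomial.funext fun x => by simp [h x]
  simp [derivative_comp]

end PolynomialFunctions

section AdjustedRepresentation

lemma adjRep_eq_taylor (g : ℝ[X]) : adjRep g = taylor (-adjShift g) g := by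
  simp [adjRep, taylor_apply, sub_eq_add_neg]

lemma natDegree_adjRep (g : ℝ[X]) : (adjRep g).natDegree = g.natDegree := by
  rw [adjRep_eq_taylor, natDegree_taylor]

lemma coeff_adjRep_of_natDegree_eq {g : ℝ[X]} {n : ℕ} (hg : g.natDegree = n + 1) :
    (adjRep g).coeff n = 0 := by
  have hlead : g.leadingCoeff ≠ 0 := leadingCoeff_ne_zero.mpr (by rintro rfl; simp at hg)
  have htop : g.coeff (n + 1) = g.leadingCoeff := by rw [leadingCoeff, hg]
  rw [adjRep_eq_taylor, taylor_coeff_of_natDegree_le hg.le, adjShift, hg, htop,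
    Nat.add_sub_cancel]
  push_cast
  field_simp
  ring

lemma eval_adjRep_add_adjShift (g : ℝ[X]) (x : ℝ) :
    (adjRep g).eval (x + adjShift g) = g.eval x := by
  simp [adjRep]

end AdjustedRepresentation

section SecondOrderFields

/-- The field `∑_v w_v(q) ∂_{p_v}` of momentum directions, with components depending on the
position only. -/
def verticalField {E : Type*} [Zero E] (w : E → E) : E × E → E × E :=
  fun x => (0, w x.1)

variable {E : Type*} [NormedAddCommGroup E] [NormedSpace ℝ E]

/-- The vector field of the second-order equation `q'' = F(q) + Λ q'`. -/
def secondOrderField (F : E → E) (Λ : E →L[ℝ] E) : E × E → E × E :=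
  fun x => (x.2, F x.1 + Λ x.2)

lemma fderiv_verticalField {w : E → E} {x : E × E} (hw : DifferentiableAt ℝ w x.1) (y : E × E) :
    fderiv ℝ (verticalField w) x y = (0, fderiv ℝ w x.1 y.1) := by
  have := (hasFDerivAt_const (0 : E) x).prodMk (hw.hasFDerivAt.comp x hasFDerivAt_fst)
  exact congrArg (· y) this.fderiv

lemma fderiv_secondOrderField {F : E → E} (Λ : E →L[ℝ] E) {x : E × E}
    (hF : DifferentiableAt ℝ F x.1) (y : E × E) :
    fderiv ℝ (secondOrderField F Λ) x y = (y.2, fderiv ℝ F x.1 y.1 + Λ y.2) := by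
  have := hasFDerivAt_snd.prodMk
    ((hF.hasFDerivAt.comp x hasFDerivAt_fst).add (Λ.hasFDerivAt.comp x hasFDerivAt_snd))
  exact congrArg (· y) this.fderiv

variable {V : Type} [Fintype V] {F w z : (V → ℝ) → (V → ℝ)} (Λ : (V → ℝ) →L[ℝ] (V → ℝ))

lemma lieB_const_verticalField (hw : Differentiable ℝ w) (u : V → ℝ) :
    lieB (fun _ => (u, 0)) (verticalField w) = verticalField fun q => fderiv ℝ w q u := by
  ext1 x
  simp [lieB, fderiv_verticalField (hw x.1), verticalField]

lemma lieB_const_secondOrderField (hF : Differentiable ℝ F) (u : V → ℝ) :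
    lieB (fun _ => (u, 0)) (secondOrderField F Λ) = verticalField fun q => fderiv ℝ F q u := by
  ext1 x
  simp [lieB, fderiv_secondOrderField Λ (hF x.1), verticalField]

lemma lieB_verticalField_secondOrderField (hF : Differentiable ℝ F) (hw : Differentiable ℝ w) :
    lieB (verticalField w) (secondOrderField F Λ) =
      fun x => (w x.1, Λ (w x.1) - fderiv ℝ w x.1 x.2) := by
  ext1 x
  simp [lieB, fderiv_secondOrderField Λ (hF x.1), fderiv_verticalField (hw x.1), verticalField,
    secondOrderField]

lemma lieB_lieB_verticalField (hF : Differentiable ℝ F) (hw : ContDiff ℝ 2 w)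
    (hz : Differentiable ℝ z) :
    lieB (lieB (verticalField w) (secondOrderField F Λ)) (verticalField z) =
      verticalField fun q => fderiv ℝ z q (w q) + fderiv ℝ w q (z q) := by
  have hw₁ : Differentiable ℝ w := hw.differentiable two_ne_zero
  rw [lieB_verticalField_secondOrderField Λ hF hw₁]
  ext1 x
  have hw₂ : DifferentiableAt ℝ (fderiv ℝ w) x.1 :=
    (hw.fderiv_right (m := 1) le_rfl).differentiable one_ne_zero _
  have hwx := (hw₁ x.1).hasFDerivAt.comp x hasFDerivAt_fst
  have hbracket := hwx.prodMk ((Λ.hasFDerivAt.comp x hwx).sub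
    ((hw₂.hasFDerivAt.comp x hasFDerivAt_fst).clm_apply hasFDerivAt_snd))
  -- The direction has no position component, which kills `Λ` and the second derivative of `w`.
  have hvert : fderiv ℝ (fun x : Phase V => (w x.1, Λ (w x.1) - fderiv ℝ w x.1 x.2)) x
      (verticalField z x) = (0, -fderiv ℝ w x.1 (z x.1)) := by
    refine (congrArg (· (verticalField z x)) hbracket.fderiv).trans ?_
    simp [verticalField]
  rw [lieB, hvert, fderiv_verticalField (hz x.1)]
  simp [verticalField]

end SecondOrderFields

section RelativePolynomials

variable {V : Type} (c : V) (δ : V → ℝ) (g k : V → ℝ[X])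

/-- The tuple of polynomials `g`, with `g_v` evaluated at the shifted displacement
`q_c − q_v + δ_v` (the variable `x_v` of `xv` when `δ_v` is the adjusting shift). -/
def relativePoly (g : V → ℝ[X]) : (V → ℝ) → (V → ℝ) :=
  fun q v => (g v).eval (q c - q v + δ v)

lemma contDiff_relativePoly [Fintype V] {n : WithTop ℕ∞} : ContDiff ℝ n (relativePoly c δ g) := by
  refine contDiff_pi.mpr fun v => ?_
  exact (contDiff_eval (g v)).comp
    (show ContDiff ℝ n fun q : V → ℝ => q c - q v + δ v by fun_prop)

lemma fderiv_relativePoly [Finite V] (q u : V → ℝ) :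
    fderiv ℝ (relativePoly c δ g) q u =
      relativePoly c δ (derivative ∘ g) q * fun v => u c - u v := by
  cases nonempty_fintype V
  have hasFDerivAt_proj (v : V) : HasFDerivAt (fun q : V → ℝ => q v) (.proj (R := ℝ) v) q :=
    hasFDerivAt_apply v q
  have hasFDerivAt_eval (v : V) := ((g v).hasDerivAt (q c - q v + δ v)).comp_hasFDerivAt q
    (((hasFDerivAt_proj c).sub (hasFDerivAt_proj v)).add_const (δ v))
  exact congrArg (· u) (hasFDerivAt_pi.mpr hasFDerivAt_eval).fderiv

variable {g k}

lemma fderiv_relativePoly_single [Finite V] [DecidableEq V] (hg : g c = 0) (q : V → ℝ) :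
    fderiv ℝ (relativePoly c δ g) q (Pi.single c 1) = relativePoly c δ (derivative ∘ g) q := by
  rw [fderiv_relativePoly]
  ext v
  by_cases hv : v = c
  · simp [relativePoly, hv, hg]
  · simp [hv]

lemma fderiv_relativePoly_add_fderiv_relativePoly [Finite V] (hg : g c = 0) (hk : k c = 0)
    (q : V → ℝ) :
    fderiv ℝ (relativePoly c δ k) q (relativePoly c δ g q) +
      fderiv ℝ (relativePoly c δ g) q (relativePoly c δ k q) =
        -relativePoly c δ (derivative ∘ (g * k)) q := by
  rw [fderiv_relativePoly, fderiv_relativePoly]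
  ext v
  simp only [relativePoly, comp_apply, Pi.add_apply, Pi.mul_apply, Pi.neg_apply, hg, hk, eval_zero,
    zero_sub, derivative_mul, eval_add, eval_mul]
  ring

/-- The vector field `∑_v g_v(q_c − q_v + δ_v) ∂_{p_v}`, linear in `g`. -/
def relativePolyField : (V → ℝ[X]) →ₗ[ℝ] (Phase V → Phase V) where
  toFun g := verticalField (relativePoly c δ g)
  map_add' g k := by ext x v <;> simp [verticalField, relativePoly]
  map_smul' a g := by ext x v <;> simp [verticalField, relativePoly]

lemma relativePolyField_apply : relativePolyField c δ g = verticalField (relativePoly c δ g) :=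
  rfl

lemma relativePolyField_C_indicator [Fintype V] [DecidableEq V] (A : Finset V) :
    relativePolyField c δ (C ∘ (A : Set V).indicator 1) = dpSum A := by
  ext x v
  · rfl
  · by_cases hv : v ∈ A <;>
      simp [relativePolyField_apply, verticalField, relativePoly, dpSum, Pi.single_apply, hv]

lemma lieB_dq_relativePolyField [Fintype V] [DecidableEq V] (hg : g c = 0) :
    lieB (dq c) (relativePolyField c δ g) = relativePolyField c δ (derivative ∘ g) := by
  have hdiff := (contDiff_relativePoly c δ g (n := 1)).differentiable one_ne_zero
  exact (lieB_const_verticalField hdiff _).trans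
    (congrArg verticalField (funext (fderiv_relativePoly_single c δ hg)))

lemma lieB_lieB_relativePolyField [Fintype V] {F : (V → ℝ) → (V → ℝ)} (hF : Differentiable ℝ F)
    (Λ : (V → ℝ) →L[ℝ] (V → ℝ)) (hg : g c = 0) (hk : k c = 0) :
    lieB (lieB (relativePolyField c δ g) (secondOrderField F Λ)) (relativePolyField c δ k) =
      -relativePolyField c δ (derivative ∘ (g * k)) := by
  have hdiff := (contDiff_relativePoly c δ k (n := 1)).differentiable one_ne_zero
  refine (lieB_lieB_verticalField Λ hF (contDiff_relativePoly c δ g) hdiff).trans ?_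
  ext x v <;> simp [verticalField, fderiv_relativePoly_add_fderiv_relativePoly c δ hg hk,
    relativePolyField_apply]

end RelativePolynomials

section Submodules

variable {V : Type} [Fintype V] [DecidableEq V] {Vstar : Finset V} {X₀ Y : Phase V → Phase V}

/-- The set `𝓜` as a real subspace. It is empty when `V*` is, so some member has to be supplied
for it to contain `0`. -/
def MM.submodule (hY : MM Vstar X₀ Y) : Submodule ℝ (Phase V → Phase V) where
  carrier := {Z | MM Vstar X₀ Z}
  zero_mem' := zero_smul ℝ Y ▸ hY.smul 0
  add_mem' := MM.add
  smul_mem' a _ := MM.smul a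

/-- The tuples `g` with `g_c = 0` whose field `∑_v g_v(q_c − q_v + δ_v) ∂_{p_v}` lies in `𝓜`. -/
def MM.relativePolySubmodule (hY : MM Vstar X₀ Y) (c : V) (δ : V → ℝ) :
    Submodule ℝ (V → ℝ[X]) :=
  hY.submodule.comap (relativePolyField c δ) ⊓ LinearMap.ker (LinearMap.proj c)

lemma MM.isSymmetricProductClosed {F : (V → ℝ) → (V → ℝ)} {Λ : (V → ℝ) →L[ℝ] (V → ℝ)} {c : V}
    (hc : MM Vstar (secondOrderField F Λ) (dq c)) (hF : Differentiable ℝ F) (δ : V → ℝ) :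
    IsSymmetricProductClosed (hc.relativePolySubmodule c δ) where
  derivative_mem := by
    rintro g ⟨hg, hgc : g c = 0⟩
    refine ⟨?_, by simp [hgc]⟩
    have hbracket := hc.lie hg
    rwa [lieB_dq_relativePolyField c δ hgc] at hbracket
  derivative_mul_mem := by
    rintro g k ⟨hg, hgc : g c = 0⟩ ⟨hk, hkc : k c = 0⟩
    refine ⟨hc.submodule.neg_mem_iff.mp ?_, by simp [hgc]⟩
    rw [← lieB_lieB_relativePolyField c δ hF Λ hgc hkc]
    exact hg.lieX.lie hk

end Submodules

section Force

variable {V : Type} [Fintype V] (G : SimpleGraph V) [DecidableRel G.Adj]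
  {U : V → ℝ → ℝ} {Vp : V → V → ℝ[X]} {c : V}

/-- The force `F_v(q) = −U_v'(q_v) − ∑_{w ~ v} V_{vw}'(q_v − q_w)` of the potentials. -/
def force (U : V → ℝ → ℝ) (Vp : V → V → ℝ[X]) : (V → ℝ) → (V → ℝ) :=
  fun q v => -deriv (U v) (q v) -
    ∑ w ∈ Finset.univ.filter (fun w => G.Adj v w), (derivative (Vp v w)).eval (q v - q w)

/-- The linear damping force `p ↦ (−γ_v p_v)_v`. -/
def damping (γ : V → ℝ) : (V → ℝ) →L[ℝ] (V → ℝ) :=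
  .pi fun v => -γ v • .proj v

lemma contDiff_force {n : WithTop ℕ∞} (hU : ∀ v, ContDiff ℝ (n + 1) (U v)) :
    ContDiff ℝ n (force G U Vp) := by
  refine contDiff_pi.mpr fun v => ?_
  refine .sub (.neg ?_) (.sum fun w _ => ?_)
  · exact (hU v).deriv'.comp (contDiff_apply ℝ ℝ v)
  · exact (contDiff_eval _).comp ((contDiff_apply ℝ ℝ v).sub (contDiff_apply ℝ ℝ w))

variable [DecidableEq V]

lemma X0_eq_secondOrderField (γ : V → ℝ) :
    X0 G γ U Vp = secondOrderField (force G U Vp) (damping γ) := by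
  ext x v
  · rfl
  · simp only [X0, secondOrderField, force, damping, ContinuousLinearMap.coe_pi', smul_apply,
      ContinuousLinearMap.proj_apply, smul_eq_mul, Pi.add_apply]
    ring

lemma fderiv_force_single_of_ne (hU : ∀ v, ContDiff ℝ 2 (U v)) (q : V → ℝ) {v : V}
    (hv : v ≠ c) :
    fderiv ℝ (force G U Vp) q (Pi.single c 1) v =
      if G.Adj v c then (derivative (derivative (Vp v c))).eval (q v - q c) else 0 := by
  have hasFDerivAt_proj (w : V) : HasFDerivAt (fun q : V → ℝ => q w) (.proj (R := ℝ) w) q :=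
    hasFDerivAt_apply w q
  have hpin : HasDerivAt (deriv (U v)) _ (q v) :=
    ((hU v).differentiable_deriv_two _).hasDerivAt
  have hforce := (hpin.comp_hasFDerivAt q (hasFDerivAt_proj v)).neg.sub <|
    HasFDerivAt.fun_sum (u := Finset.univ.filter (G.Adj v)) fun w _ =>
      ((derivative (Vp v w)).hasDerivAt (q v - q w)).comp_hasFDerivAt q
        ((hasFDerivAt_proj v).sub (hasFDerivAt_proj w))
  have hdiff := (contDiff_force G (Vp := Vp) hU).differentiable one_ne_zero q
  have hcomp := (hasFDerivAt_pi'.mp hdiff.hasFDerivAt v).unique hforce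
  refine (congrArg (· (Pi.single c 1)) hcomp).trans ?_
  simp [hv, Pi.single_apply]

end Force

section AdjustedTuple

variable {V : Type} [Fintype V] [DecidableEq V] (G : SimpleGraph V) [DecidableRel G.Adj]
  {U : V → ℝ → ℝ} {Vp : V → V → ℝ[X]} {c : V}

lemma mem_Tset {v : V} : v ∈ Tset G c ↔ G.Adj c v := by
  simp [Tset]

lemma dmax_pos (hdeg : ∀ v, G.Adj c v → 3 ≤ (Vp c v).natDegree) {v : V} (hv : v ∈ Tset G c) :
    0 < dmax G Vp c := by
  refine lt_of_lt_of_le ?_ (Finset.le_sup (f := fun v => (ft Vp c v).natDegree) hv)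
  have := hdeg v ((mem_Tset G).mp hv)
  rw [ft, natDegree_adjRep, natDegree_derivative, natDegree_derivative]
  lia

/-- The shifts `δ_{cv}` turning the `V''_{cv}` into their adjusted representations. -/
def adjustingShifts (Vp : V → V → ℝ[X]) (c : V) : V → ℝ :=
  fun v => adjShift (derivative (derivative (Vp c v)))

/-- The tuple of the adjusted representations `f̃_v`, `v ∈ 𝒯`, extended by `0` to all vertices. -/
def adjustedTuple (Vp : V → V → ℝ[X]) (c : V) : V → ℝ[X] :=
  (Tset G c : Set V).indicator (ft Vp c)

lemma adjustedTuple_self : adjustedTuple G Vp c c = 0 := by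
  simp [adjustedTuple, mem_Tset]

lemma fderiv_force_eq_adjustedTuple (hU : ∀ v, ContDiff ℝ 2 (U v))
    (hsym : ∀ v, G.Adj c v → ∀ x, (Vp v c).eval x = (Vp c v).eval (-x)) (q : V → ℝ) {v : V}
    (hv : v ≠ c) :
    fderiv ℝ (force G U Vp) q (Pi.single c 1) v =
      relativePoly c (adjustingShifts Vp c) (adjustedTuple G Vp c) q v := by
  rw [fderiv_force_single_of_ne G hU q hv]
  by_cases hcv : G.Adj c v
  · rw [if_pos hcv.symm, eval_derivative_derivative_neg (hsym v hcv), neg_sub, relativePoly,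
      adjustedTuple, indicator_of_mem (by simpa [mem_Tset] using hcv), ft, adjustingShifts,
      eval_adjRep_add_adjShift]
  · simp [relativePoly, adjustedTuple, mem_Tset, hcv, G.adj_comm v c]

lemma relativePolyField_adjustedTuple_mem {Vstar : Finset V} {Λ : (V → ℝ) →L[ℝ] (V → ℝ)}
    (hU : ∀ v, ContDiff ℝ (⊤ : ℕ∞) (U v))
    (hsym : ∀ v, G.Adj c v → ∀ x, (Vp v c).eval x = (Vp c v).eval (-x))
    (hc : Controllable Vstar (secondOrderField (force G U Vp) Λ) c) :
    MM Vstar (secondOrderField (force G U Vp) Λ)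
      (relativePolyField c (adjustingShifts Vp c) (adjustedTuple G Vp c)) := by
  have hF : ContDiff ℝ (⊤ : ℕ∞) (force G U Vp) := contDiff_force G hU
  let F' : (V → ℝ) → (V → ℝ) := fun q => fderiv ℝ (force G U Vp) q (Pi.single c 1)
  have hF' : ContDiff ℝ (⊤ : ℕ∞) F' := (hF.fderiv_right le_rfl).clm_apply contDiff_const
  have hmem : MM Vstar (secondOrderField (force G U Vp) Λ) (verticalField F') :=
    lieB_const_secondOrderField Λ (hF.differentiable (by simp)) _ ▸ hc.1.lieX
  have hself : ContDiff ℝ (⊤ : ℕ∞) fun x : Phase V => -F' x.1 c :=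
    ((contDiff_pi.mp hF' c).comp contDiff_fst).neg
  -- `[∂_{q_c}, X₀]` has the right components away from `c`; subtract a multiple of `∂_{p_c}`.
  convert hmem.add (hc.2.mulS _ hself) using 1
  ext x v
  · simp [relativePolyField_apply, verticalField, dp]
  · obtain rfl | hv := eq_or_ne v c
    · simp [relativePolyField_apply, verticalField, dp, relativePoly, adjustedTuple_self]
    · have := fderiv_force_eq_adjustedTuple G (fun v => (hU v).of_le ENat.LEInfty.out) hsym x.1 hv
      simp [relativePolyField_apply, verticalField, dp, F', hv, this]

lemma natDegree_adjustedTuple_le (v : V) :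
    (adjustedTuple G Vp c v).natDegree ≤ dmax G Vp c := by
  by_cases hv : v ∈ Tset G c
  · rw [adjustedTuple, indicator_of_mem hv]
    exact Finset.le_sup (f := fun v => (ft Vp c v).natDegree) hv
  · simp [adjustedTuple, hv]

lemma factorialCoeff_adjustedTuple {v : V} (hv : v ∈ Tset G c) (ℓ : ℕ) :
    factorialCoeff (adjustedTuple G Vp c) ℓ v = bcoef Vp c v ℓ := by
  simp [factorialCoeff, adjustedTuple, bcoef, hv]

lemma support_factorialCoeff_adjustedTuple (hd : 0 < dmax G Vp c) :
    support (factorialCoeff (adjustedTuple G Vp c) (dmax G Vp c)) = Dd G Vp c := by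
  ext v
  by_cases hv : v ∈ Tset G c
  · have hle : (ft Vp c v).natDegree ≤ dmax G Vp c :=
      Finset.le_sup (f := fun v => (ft Vp c v).natDegree) hv
    have hcoeff : (ft Vp c v).coeff (dmax G Vp c) ≠ 0 ↔
        (ft Vp c v).natDegree = dmax G Vp c := by
      refine ⟨fun h => hle.antisymm (le_natDegree_of_ne_zero h), fun h => ?_⟩
      rw [← h, coeff_natDegree, leadingCoeff_ne_zero]
      exact ne_zero_of_natDegree_gt (h ▸ hd)
    simp [factorialCoeff_adjustedTuple G hv, bcoef, Dd, hv, hcoeff, Nat.factorial_ne_zero]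
  · simp [factorialCoeff, adjustedTuple, Dd, hv]

lemma coeff_adjustedTuple_of_mem_Dd {n : ℕ} (hn : dmax G Vp c = n + 1) {v : V}
    (hv : v ∈ Dd G Vp c) : (adjustedTuple G Vp c v).coeff n = 0 := by
  obtain ⟨hvT, hdeg⟩ := Finset.mem_filter.mp hv
  rw [ft, natDegree_adjRep, hn] at hdeg
  rw [adjustedTuple, indicator_of_mem hvT, ft, coeff_adjRep_of_natDegree_eq hdeg]

lemma setOf_factorialCoeff_adjustedTuple_eq (hd : 0 < dmax G Vp c) (ℓ : ℕ) (b : ℝ) :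
    {v ∈ support (factorialCoeff (adjustedTuple G Vp c) (dmax G Vp c)) |
      factorialCoeff (adjustedTuple G Vp c) ℓ v = b} =
        ((Dd G Vp c).filter fun v => bcoef Vp c v ℓ = b : Finset V) := by
  rw [support_factorialCoeff_adjustedTuple G hd, Finset.coe_filter]
  refine sep_ext_iff.mpr fun v hv => ?_
  rw [factorialCoeff_adjustedTuple G (Finset.mem_filter.mp hv).1]

end AdjustedTuple

theorem coefficient_level_sets_mem_general
    {V : Type} [Fintype V] [DecidableEq V] (G : SimpleGraph V) [DecidableRel G.Adj]
    (Vstar : Finset V) (γ : V → ℝ) {U : V → ℝ → ℝ} {Vp : V → V → ℝ[X]} {c : V}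
    (hU : ∀ v, ContDiff ℝ (⊤ : ℕ∞) (U v))
    (hsym : ∀ v, G.Adj c v → ∀ x, (Vp v c).eval x = (Vp c v).eval (-x))
    (hd : 0 < dmax G Vp c) (hc : Controllable Vstar (X0 G γ U Vp) c) (ℓ : ℕ) (b : ℝ) :
    MM Vstar (X0 G γ U Vp) (dpSum ((Dd G Vp c).filter fun v => bcoef Vp c v ℓ = b)) := by
  rw [X0_eq_secondOrderField] at hc ⊢
  have hF : ContDiff ℝ (⊤ : ℕ∞) (force G U Vp) := contDiff_force G hU
  have hN := hc.1.isSymmetricProductClosed (hF.differentiable (by simp)) (adjustingShifts Vp c)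
  have hf : adjustedTuple G Vp c ∈ hc.1.relativePolySubmodule c (adjustingShifts Vp c) :=
    ⟨relativePolyField_adjustedTuple_mem G hU hsym hc, adjustedTuple_self G⟩
  obtain ⟨n, hn⟩ := Nat.exists_eq_add_one_of_ne_zero hd.ne'
  have hD := support_factorialCoeff_adjustedTuple G hd
  have hlevel := hN.indicator_level_set_mem hf (fun v => hn ▸ natDegree_adjustedTuple_le G v)
    (fun v hv => coeff_adjustedTuple_of_mem_Dd G hn (by simpa [← hn, hD] using hv)) ℓ b
  rw [← hn, setOf_factorialCoeff_adjustedTuple_eq G hd] at hlevel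
  exact relativePolyField_C_indicator c _ _ ▸ hlevel.1

/-- Lemma 4.11. Assume `c` is controllable. Then for every
`ℓ ∈ {0, …, d}` and every value `b ∈ B_ℓ^d = {b_{vℓ} : v ∈ D^d}` (i.e. `b = b_{v₀ℓ}`
for some `v₀ ∈ D^d`), the vector field `∑_{v∈D^d : b_{vℓ}=b} ∂_{p_v}` belongs to `𝓜`. -/
theorem coefficient_level_sets_mem
    {V : Type} [Fintype V] [DecidableEq V] (G : SimpleGraph V) [DecidableRel G.Adj]
    (Vstar : Finset V) (γ : V → ℝ) (U : V → ℝ → ℝ) (Vp : V → V → Polynomial ℝ)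
    (hγpos : ∀ v ∈ Vstar, 0 < γ v) (hγ0 : ∀ v ∉ Vstar, γ v = 0)
    (hU : ∀ v, ContDiff ℝ (⊤ : ℕ∞) (U v))
    (hsym : ∀ u v, G.Adj u v → ∀ x : ℝ, (Vp v u).eval x = (Vp u v).eval (-x))
    (hdeg : ∀ u v, G.Adj u v → 3 ≤ (Vp u v).natDegree)
    (c : V) (hc : Controllable Vstar (X0 G γ U Vp) c) :
    ∀ ℓ ≤ dmax G Vp c, ∀ v₀ ∈ Dd G Vp c,
      MM Vstar (X0 G γ U Vp)
        (dpSum ((Dd G Vp c).filter fun v => bcoef Vp c v ℓ = bcoef Vp c v₀ ℓ)) := by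
  intro ℓ _ v₀ hv₀
  exact coefficient_level_sets_mem_general G Vstar γ hU (hsym c)
    (dmax_pos G (hdeg c) (Finset.mem_filter.mp hv₀).1) hc ℓ (bcoef Vp c v₀ ℓ)
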